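/- The counts of admissible patterns for block sizes 16 and 32 are P_16 = 168 and P_32 = 7581. -/

import Mathlib

/-!
If a nonempty domination contiguous set `S ⊆ {0, …, 2 ^ n - 1}` contains `2 ^ n - 1`, which dominates
every element, then `S` is an up-set for domination (`mem_UR_iff`). Domination on
`{0, …, 2 ^ n - 1}` is the Boolean lattice of dimension `n`, so `Pcount (2 ^ n)` is the `n`-th
Dedekind number.

Cutting by the top binary digit, an up-set of dimension `n + 1` is a pair of up-sets of dimension
`n`, the lower half contained in the upper one (`isUpCode_join_iff`). With up-sets coded by natural
numbers through their binary digits, this recursion gives duplicate-free lists `upCodes n` of all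
up-sets, and the lengths of `upCodes 4` and `upCodes 5` are found by evaluation in the kernel.
-/

/-- `i` binary-dominates `j`: every binary digit of `j` is at most that of `i`. -/
def Dom (i j : ℕ) : Prop := ∀ k, Nat.testBit j k = true → Nat.testBit i k = true

/-- A finite set of naturals is domination contiguous. -/
def DomContiguous (S : Finset ℕ) : Prop :=
  ∀ h ∈ S, ∀ j ∈ S, ∀ i : ℕ, Dom h i → Dom i j → i ∈ S

open scoped Classical in
/-- `UR R`: the family of subsets `S ⊆ {0,...,R−1}` that are domination contiguous
and satisfy: if `S` is nonempty then `R−1 ∈ S`. -/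
noncomputable def UR (R : ℕ) : Finset (Finset ℕ) :=
  (Finset.range R).powerset.filter
    (fun S => DomContiguous S ∧ (S.Nonempty → R - 1 ∈ S))

/-- `Pcount R` is the number of admissible frozen-bit patterns on a block of size `R`. -/
noncomputable def Pcount (R : ℕ) : ℕ := (UR R).card

/-- Codes of the up-sets of the Boolean lattice `{0, …, 2 ^ n - 1}` under domination. A set is coded
by the number `m` whose `i`-th binary digit is `1` exactly when `i` belongs to it. An up-set of the
`(n + 1)`-dimensional lattice is a pair of up-sets of the `n`-dimensional one, its lower half `p.1`
being contained in its upper half `p.2`. -/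
def upCodes : ℕ → List ℕ
  | 0 => [0, 1]
  | n + 1 => ((upCodes n ×ˢ upCodes n).filter (fun p => p.1 &&& p.2 = p.1)).map
      (fun p => 2 ^ 2 ^ n * p.2 + p.1)

/-- `m` is the code of an up-set of `{0, …, 2 ^ n - 1}` under domination. -/
def IsUpCode (n m : ℕ) : Prop :=
  m < 2 ^ 2 ^ n ∧
    ∀ i < 2 ^ n, ∀ j < 2 ^ n, Dom j i → m.testBit i = true → m.testBit j = true

theorem Dom.le {h i : ℕ} (hd : Dom h i) : i ≤ h := by
  have : i &&& h = i := by
    refine Nat.eq_of_testBit_eq fun k => ?_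
    have := hd k
    rw [Nat.testBit_and]
    cases h1 : i.testBit k <;> simp_all
  rw [← this]
  exact Nat.and_le_right

theorem dom_two_pow_sub_one {n i : ℕ} (hi : i < 2 ^ n) : Dom (2 ^ n - 1) i := by
  intro k hk
  rw [Nat.testBit_two_pow_sub_one, decide_eq_true_iff]
  by_contra! hkn
  rw [Nat.testBit_lt_two_pow (hi.trans_le (Nat.pow_le_pow_right two_pos hkn))] at hk
  exact absurd hk (by simp)

theorem testBit_two_pow_add {n i : ℕ} (hi : i < 2 ^ n) (k : ℕ) :
    (2 ^ n + i).testBit k = (decide (k = n) || i.testBit k) := by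
  have h := Nat.testBit_two_pow_mul_add 1 hi k
  rw [mul_one] at h
  rw [h]
  split_ifs with hk
  · simp [hk.ne]
  · push Not at hk
    rw [Nat.testBit_lt_two_pow (hi.trans_le (Nat.pow_le_pow_right two_pos hk)), Bool.or_false,
      Bool.eq_iff_iff, Nat.testBit_one_eq_true_iff_self_eq_zero, decide_eq_true_iff]
    omega

theorem dom_high_high {n i j : ℕ} (hi : i < 2 ^ n) (hj : j < 2 ^ n) :
    Dom (2 ^ n + j) (2 ^ n + i) ↔ Dom j i := by
  refine forall_congr' fun k => ?_
  rw [testBit_two_pow_add hi, testBit_two_pow_add hj]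
  by_cases hk : k = n
  · subst hk
    simp [Nat.testBit_lt_two_pow hi]
  · simp [hk]

theorem dom_high_low {n i j : ℕ} (hi : i < 2 ^ n) (hj : j < 2 ^ n) :
    Dom (2 ^ n + j) i ↔ Dom j i := by
  refine forall_congr' fun k => ?_
  rw [testBit_two_pow_add hj]
  by_cases hk : k = n
  · subst hk
    simp [Nat.testBit_lt_two_pow hi]
  · simp [hk]

theorem testBit_join_low {N a i : ℕ} (b : ℕ) (ha : a < 2 ^ N) (hi : i < N) :
    (2 ^ N * b + a).testBit i = a.testBit i := by
  rw [Nat.testBit_two_pow_mul_add b ha, if_pos hi]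

theorem testBit_join_high {N a : ℕ} (b i : ℕ) (ha : a < 2 ^ N) :
    (2 ^ N * b + a).testBit (N + i) = b.testBit i := by
  rw [Nat.testBit_two_pow_mul_add b ha, if_neg (by omega), Nat.add_sub_cancel_left]

theorem land_eq_left_iff {N a b : ℕ} (ha : a < 2 ^ N) :
    a &&& b = a ↔ ∀ i < N, a.testBit i = true → b.testBit i = true := by
  constructor
  · intro h i _ hai
    rw [← h, Nat.testBit_and, Bool.and_eq_true] at hai
    exact hai.2
  · intro h
    refine Nat.eq_of_testBit_eq fun k => ?_
    rw [Nat.testBit_and]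
    rcases lt_or_ge k N with hk | hk
    · have := h k hk
      cases h1 : a.testBit k <;> simp_all
    · rw [Nat.testBit_lt_two_pow (ha.trans_le (Nat.pow_le_pow_right two_pos hk)), Bool.false_and]

/-- The Dedekind recursion: cutting by the top coordinate, an up-set is a pair of up-sets, the lower
half contained in the upper half. -/
theorem isUpCode_join_iff {n a : ℕ} (b : ℕ) (ha : a < 2 ^ 2 ^ n) :
    IsUpCode (n + 1) (2 ^ 2 ^ n * b + a) ↔ IsUpCode n a ∧ IsUpCode n b ∧ a &&& b = a := by
  have hpow : 2 ^ (n + 1) = 2 ^ n + 2 ^ n := by ring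
  rw [land_eq_left_iff ha]
  constructor
  · rintro ⟨hlt, hup⟩
    have hb : b < 2 ^ 2 ^ n := by
      rw [hpow, pow_add] at hlt
      exact Nat.lt_of_mul_lt_mul_left (lt_of_le_of_lt (Nat.le_add_right _ _) hlt)
    refine ⟨⟨ha, fun i hi j hj hd h => ?_⟩, ⟨hb, fun i hi j hj hd h => ?_⟩, fun i hi h => ?_⟩
    · rw [← testBit_join_low b ha hi] at h
      rw [← testBit_join_low b ha hj]
      exact hup i (by omega) j (by omega) hd h
    · rw [← testBit_join_high b i ha] at h
      rw [← testBit_join_high b j ha]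
      exact hup _ (by omega) _ (by omega) ((dom_high_high hi hj).2 hd) h
    · rw [← testBit_join_low b ha hi] at h
      rw [← testBit_join_high b i ha]
      exact hup i (by omega) _ (by omega) ((dom_high_low hi hi).2 fun _ hk => hk) h
  · rintro ⟨⟨_, hupa⟩, ⟨hb, hupb⟩, hab⟩
    refine ⟨?_, fun i hi j hj hd h => ?_⟩
    · rw [hpow, pow_add]
      nlinarith
    · rcases lt_or_ge i (2 ^ n) with hi' | hi' <;> rcases lt_or_ge j (2 ^ n) with hj' | hj'
      · rw [testBit_join_low b ha hi'] at h
        rw [testBit_join_low b ha hj']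
        exact hupa i hi' j hj' hd h
      · obtain ⟨j, rfl⟩ := Nat.exists_eq_add_of_le hj'
        have hj'' : j < 2 ^ n := by omega
        rw [testBit_join_low b ha hi'] at h
        rw [testBit_join_high b j ha]
        exact hab j hj'' (hupa i hi' j hj'' ((dom_high_low hi' hj'').1 hd) h)
      · exact absurd hd.le (by omega)
      · obtain ⟨i, rfl⟩ := Nat.exists_eq_add_of_le hi'
        obtain ⟨j, rfl⟩ := Nat.exists_eq_add_of_le hj'
        have hi'' : i < 2 ^ n := by omega
        have hj'' : j < 2 ^ n := by omega
        rw [testBit_join_high b i ha] at h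
        rw [testBit_join_high b j ha]
        exact hupb i hi'' j hj'' ((dom_high_high hi'' hj'').1 hd) h

theorem mem_upCodes_iff (n m : ℕ) : m ∈ upCodes n ↔ IsUpCode n m := by
  induction n generalizing m with
  | zero =>
    constructor
    · intro h
      have h01 : m = 0 ∨ m = 1 := by simpa [upCodes] using h
      refine ⟨by rw [pow_zero, pow_one]; omega, fun i hi j hj _ hm => ?_⟩
      have : i = j := by omega
      exact this ▸ hm
    · rintro ⟨h, -⟩
      have : m = 0 ∨ m = 1 := by rw [pow_zero, pow_one] at h; omega
      simpa [upCodes] using this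
  | succ n ih =>
    simp only [upCodes, List.mem_map, List.mem_filter, List.mem_product, Prod.exists,
      decide_eq_true_eq, ih]
    constructor
    · rintro ⟨a, b, ⟨⟨ha, hb⟩, hab⟩, rfl⟩
      exact (isUpCode_join_iff b ha.1).2 ⟨ha, hb, hab⟩
    · intro hm
      have hr : m % 2 ^ 2 ^ n < 2 ^ 2 ^ n := Nat.mod_lt _ (by positivity)
      have hdm := Nat.div_add_mod m (2 ^ 2 ^ n)
      rw [← hdm, isUpCode_join_iff _ hr] at hm
      exact ⟨_, _, ⟨⟨hm.1, hm.2.1⟩, hm.2.2⟩, hdm⟩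

theorem nodup_upCodes (n : ℕ) : (upCodes n).Nodup := by
  induction n with
  | zero => simp [upCodes]
  | succ n ih =>
    refine List.Nodup.map_on ?_ ((ih.product ih).filter _)
    rintro ⟨a, b⟩ hp ⟨c, d⟩ hq h
    have ha := ((mem_upCodes_iff n a).1 (List.mem_product.1 (List.mem_filter.1 hp).1).1).1
    have hc := ((mem_upCodes_iff n c).1 (List.mem_product.1 (List.mem_filter.1 hq).1).1).1
    have hpos : 0 < 2 ^ 2 ^ n := by positivity
    have hac : a = c := by
      have := congrArg (· % 2 ^ 2 ^ n) h
      simpa [Nat.mul_add_mod, Nat.mod_eq_of_lt ha, Nat.mod_eq_of_lt hc] using this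
    subst hac
    have hbd : b = d := Nat.eq_of_mul_eq_mul_left hpos (Nat.add_right_cancel h)
    rw [hbd]

/-- Once the top element is forced into a nonempty set, being domination contiguous means being an
up-set. -/
theorem mem_UR_iff (n : ℕ) (S : Finset ℕ) :
    S ∈ UR (2 ^ n) ↔ (∀ i ∈ S, i < 2 ^ n) ∧
      ∀ i < 2 ^ n, ∀ j < 2 ^ n, Dom j i → i ∈ S → j ∈ S := by
  simp only [UR, Finset.mem_filter, Finset.mem_powerset, Finset.subset_iff, Finset.mem_range]
  refine and_congr_right fun hS => ⟨?_, ?_⟩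
  · rintro ⟨hc, htop⟩ i _ j hj hd hi
    exact hc _ (htop ⟨i, hi⟩) i hi j (dom_two_pow_sub_one hj) hd
  · intro hup
    refine ⟨fun h hh j hj i hhi hij => ?_, ?_⟩
    · exact hup j (hS hj) i (hhi.le.trans_lt (hS hh)) hij hj
    · rintro ⟨x, hx⟩
      exact hup x (hS hx) _ (Nat.sub_lt (by positivity) one_pos) (dom_two_pow_sub_one (hS hx)) hx

theorem Pcount_two_pow (n : ℕ) : Pcount (2 ^ n) = (upCodes n).length := by
  rw [Pcount, ← List.toFinset_card_of_nodup (nodup_upCodes n)]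
  symm
  refine Finset.card_equiv Finset.equivBitIndices fun m => ?_
  rw [List.mem_toFinset, mem_upCodes_iff, mem_UR_iff]
  simp only [IsUpCode, Finset.equivBitIndices_apply, List.mem_toFinset, Nat.mem_bitIndices]
  refine and_congr_left fun _ => ⟨fun hm i hi => ?_, fun h => ?_⟩
  · by_contra! hle
    rw [Nat.testBit_lt_two_pow (hm.trans_le (Nat.pow_le_pow_right two_pos hle))] at hi
    exact absurd hi (by simp)
  · refine Nat.lt_pow_two_of_testBit _ fun i hi => ?_
    by_contra hne
    exact absurd (h i (by simpa using hne)) (by omega)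

/-- The form of the recursion used for evaluation: it replaces the traversal of one long list by
sums of short counts, so that the kernel never recurses deeply. -/
theorem length_upCodes_succ (n : ℕ) :
    (upCodes (n + 1)).length =
      ((upCodes n).map fun a => ((upCodes n).filter fun b => a &&& b = a).length).sum := by
  simp only [upCodes, List.length_map, SProd.sprod, List.product, List.filter_flatMap,
    List.length_flatMap, List.filter_map, Function.comp_def]

theorem length_upCodes_four : (upCodes 4).length = 168 := by
  rw [length_upCodes_succ]
  decide +kernel

theorem length_upCodes_five : (upCodes 5).length = 7581 := by
  rw [length_upCodes_succ]
  decide +kernel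

theorem Pcount_16_32 : Pcount 16 = 168 ∧ Pcount 32 = 7581 := by
  exact ⟨(Pcount_two_pow 4).trans length_upCodes_four,
    (Pcount_two_pow 5).trans length_upCodes_five⟩
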